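/- Let 1/2 < δ < 1, set ρ := 2 - 1/δ, and let c ∈ ℝ. Let k, N : ℕ → ℕ satisfy k(d) < d < N(d), d/N(d) → δ, k(d)/d → ρ, and (N(d) - 2d + k(d))/√d → c as d → ∞. Then Q_{d,k(d)}(N(d)) → Φ(-c/√(2(1-ρ))) as d → ∞, and this limit lies in the open interval (0,1). -/

import Mathlib

open Filter Finset Real Topology

/-- `Q d k N = 2^k · (Σ_{i=0}^{d-k-1} C(N-k-1, i)) / (Σ_{i=0}^{d-1} C(N-1, i))`,
the normalized expected `k`-face number `E f_k(C_N)/C(N,k)` of the Cover–Efron cone. -/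
noncomputable def Q (d k N : ℕ) : ℝ :=
  2 ^ k * (∑ i ∈ Finset.range (d - k), ((N - k - 1).choose i : ℝ)) /
    (∑ i ∈ Finset.range d, ((N - 1).choose i : ℝ))

/-- The cumulative distribution function `Φ` of the standard normal distribution. -/
noncomputable def stdNormalCDF (x : ℝ) : ℝ :=
  (Real.sqrt (2 * Real.pi))⁻¹ * ∫ t in Set.Iic x, Real.exp (-t ^ 2 / 2)

open MeasureTheory ProbabilityTheory
open scoped NNReal ENNReal

lemma tendsto_cos_pow {n : ℕ → ℕ} {x : ℕ → ℝ} {v : ℝ} (hx : Tendsto x atTop (𝓝 0))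
    (hn : Tendsto (fun d => n d * x d ^ 2) atTop (𝓝 v)) :
    Tendsto (fun d => cos (x d) ^ n d) atTop (𝓝 (exp (-v / 2))) := by
  have hcos : Tendsto (fun d => cos (x d)) atTop (𝓝 1) := by
    simpa [Function.comp_def] using (continuous_cos.tendsto 0).comp hx
  have hpos : ∀ᶠ d in atTop, 0 < cos (x d) := hcos.eventually (lt_mem_nhds one_pos)
  have herr : Tendsto (fun d => n d * (cos (x d) - (1 - x d ^ 2 / 2))) atTop (𝓝 0) := by
    have hb : Tendsto (fun d => (n d * x d ^ 2) * (x d ^ 2 * (5 / 96))) atTop (𝓝 0) := by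
      simpa using hn.mul ((hx.pow 2).mul_const (5 / 96))
    refine squeeze_zero_norm' ?_ hb
    have hsmall : ∀ᶠ d in atTop, |x d| < 1 := by
      have := hx.abs
      simp only [abs_zero] at this
      exact this.eventually (gt_mem_nhds one_pos)
    filter_upwards [hsmall] with d hd
    have h := Real.cos_bound hd.le
    rw [norm_mul, Real.norm_natCast, Real.norm_eq_abs]
    calc (n d : ℝ) * |cos (x d) - (1 - x d ^ 2 / 2)| ≤ n d * (|x d| ^ 4 * (5 / 96)) := by gcongr
      _ = _ := by
        rw [show |x d| ^ 4 = (|x d| ^ 2) ^ 2 by ring, sq_abs]; ring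
  have hsub : Tendsto (fun d => n d * (cos (x d) - 1)) atTop (𝓝 (-v / 2)) := by
    have := herr.sub (hn.div_const 2)
    refine (this.congr fun d => ?_).trans_eq ?_ <;> ring_nf
  have hlog : Tendsto (fun d => n d * log (cos (x d))) atTop (𝓝 (-v / 2)) := by
    have hlow : Tendsto (fun d => n d * (cos (x d) - 1) / cos (x d)) atTop (𝓝 (-v / 2)) := by
      simpa [Pi.div_def] using hsub.div hcos one_ne_zero
    refine tendsto_of_tendsto_of_tendsto_of_le_of_le' hlow hsub ?_ ?_
    · filter_upwards [hpos] with d hd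
      have := Real.one_sub_inv_le_log_of_pos hd
      calc n d * (cos (x d) - 1) / cos (x d) = n d * (1 - (cos (x d))⁻¹) := by field_simp
        _ ≤ _ := by gcongr
    · filter_upwards [hpos] with d hd
      have := Real.log_le_sub_one_of_pos hd
      gcongr
  refine ((continuous_exp.tendsto _).comp hlog).congr' ?_
  filter_upwards [hpos] with d hd
  simp only [Function.comp_apply]
  rw [mul_comm, Real.exp_mul, Real.exp_log hd, Real.rpow_natCast]

/-- The law of `2 (X - M) / a` where `X` is binomial with parameters `n` and `1 / 2`. -/
noncomputable def scaledBinomial (n M : ℕ) (a : ℝ) : Measure ℝ :=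
  ∑ i ∈ Finset.range (n + 1),
    ((n.choose i : ℝ≥0) / 2 ^ n) • Measure.dirac (2 * ((i : ℝ) - M) / a)

lemma scaledBinomial_Iio {n M : ℕ} (hM : M ≤ n + 1) {a : ℝ} (ha : 0 < a) :
    scaledBinomial n M a (Set.Iio 0) =
      ENNReal.ofReal ((∑ i ∈ Finset.range M, (n.choose i : ℝ)) / 2 ^ n) := by
  have hmem (i : ℕ) : 2 * ((i : ℝ) - M) / a < 0 ↔ i < M := by
    rw [div_lt_iff₀ ha, zero_mul, ← Nat.cast_lt (α := ℝ)]
    constructor <;> intro h <;> linarith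
  have hfilter : (Finset.range (n + 1)).filter (· < M) = Finset.range M := by
    ext i; simp; omega
  rw [scaledBinomial, Measure.finsetSum_apply]
  simp only [Measure.smul_apply, Measure.dirac_apply' _ measurableSet_Iio, Set.indicator_apply,
    Set.mem_Iio, hmem, Pi.one_apply]
  simp only [smul_ite, smul_zero]
  rw [← Finset.sum_filter, hfilter, Finset.sum_div,
    ENNReal.ofReal_sum_of_nonneg fun i _ => by positivity]
  refine Finset.sum_congr rfl fun i _ => ?_
  rw [ENNReal.smul_def, smul_eq_mul, mul_one, ← ENNReal.ofReal_coe_nnreal]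
  simp

instance isProbabilityMeasure_scaledBinomial (n M : ℕ) (a : ℝ) :
    IsProbabilityMeasure (scaledBinomial n M a) := by
  constructor
  rw [scaledBinomial, Measure.finsetSum_apply]
  simp only [Measure.smul_apply, measure_univ, ENNReal.smul_def, smul_eq_mul, mul_one]
  rw [← ENNReal.ofNNReal_finsetSum, ← Finset.sum_div, ← Nat.cast_sum, Nat.sum_range_choose]
  simp

lemma charFun_scaledBinomial (n M : ℕ) (a t : ℝ) :
    charFun (scaledBinomial n M a) t =
      (cos (t / a) ^ n : ℝ) * Complex.exp (((n - 2 * M) / a * t : ℝ) * Complex.I) := by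
  rw [charFun_apply_real, scaledBinomial, integral_finsetSum_measure]
  swap
  · exact fun i _ => (integrable_dirac (by simp)).smul_measure_nnreal
  simp only [integral_smul_nnreal_measure, integral_dirac]
  have hcos : Complex.cos ((t / a : ℝ) : ℂ) =
      (Complex.exp (2 * (t / a : ℝ) * Complex.I) + 1) / 2 *
        Complex.exp (-((t / a : ℝ) * Complex.I)) := by
    rw [Complex.cos, div_mul_eq_mul_div, add_mul, ← Complex.exp_add]
    ring_nf
  rw [Complex.ofReal_pow, Complex.ofReal_cos, hcos, mul_pow, div_pow, add_pow, Finset.sum_div,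
    Finset.sum_mul, Finset.sum_mul]
  refine Finset.sum_congr rfl fun i _ => ?_
  rw [NNReal.smul_def, Complex.real_smul, ← Complex.exp_nat_mul, ← Complex.exp_nat_mul, one_pow,
    mul_one]
  push_cast
  have hexp : Complex.exp (t * (2 * ((i : ℂ) - M) / a) * Complex.I) =
      Complex.exp (i * (2 * (t / a) * Complex.I)) * Complex.exp (n * -(t / a * Complex.I)) *
        Complex.exp ((n - 2 * M) / a * t * Complex.I) := by
    rw [← Complex.exp_add, ← Complex.exp_add]
    congr 1
    ring
  rw [hexp]
  ring

lemma tendsto_binomial_sum {n M : ℕ → ℕ} {a : ℕ → ℝ} {x : ℝ} {v : ℝ≥0}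
    (ha : Tendsto a atTop atTop) (hM : ∀ᶠ d in atTop, M d ≤ n d + 1)
    (hn : Tendsto (fun d => n d / a d ^ 2) atTop (𝓝 (v : ℝ)))
    (hx : Tendsto (fun d => (n d - 2 * M d) / a d) atTop (𝓝 x))
    (h0 : gaussianReal x v {0} = 0) :
    Tendsto (fun d => (∑ i ∈ Finset.range (M d), ((n d).choose i : ℝ)) / 2 ^ n d) atTop
      (𝓝 ((gaussianReal x v).real (Set.Iio 0))) := by
  let μ : ℕ → ProbabilityMeasure ℝ := fun d => ⟨scaledBinomial (n d) (M d) (a d), inferInstance⟩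
  let μ₀ : ProbabilityMeasure ℝ := ⟨gaussianReal x v, inferInstance⟩
  have hμ : Tendsto μ atTop (𝓝 μ₀) := by
    refine ProbabilityMeasure.tendsto_iff_tendsto_charFun.2 fun t => ?_
    simp only [μ, μ₀, ProbabilityMeasure.coe_mk, charFun_scaledBinomial, charFun_gaussianReal]
    have h1 : Tendsto (fun d => cos (t / a d) ^ n d) atTop (𝓝 (exp (-(v * t ^ 2) / 2))) := by
      refine tendsto_cos_pow (ha.const_div_atTop t) ((hn.mul_const (t ^ 2)).congr fun d => ?_)
      ring
    have h2 := (Complex.continuous_ofReal.tendsto _).comp h1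
    have h3 := (Complex.continuous_exp.tendsto _).comp
      (((Complex.continuous_ofReal.tendsto _).comp (hx.mul_const t)).mul_const Complex.I)
    refine (h2.mul h3).trans_eq ?_
    rw [Complex.ofReal_exp, ← Complex.exp_add]
    congr 2
    push_cast
    ring
  have key := ProbabilityMeasure.tendsto_measure_of_null_frontier_of_tendsto' hμ
    (E := Set.Iio 0) (by simpa [μ₀] using h0)
  have key' := (ENNReal.tendsto_toReal (measure_ne_top _ _)).comp key
  refine key'.congr' ?_
  filter_upwards [hM, ha.eventually_gt_atTop 0] with d hd had
  simp only [Function.comp_apply, μ, ProbabilityMeasure.coe_mk]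
  rw [scaledBinomial_Iio hd had, ENNReal.toReal_ofReal (by positivity)]

lemma stdNormalCDF_eq (y : ℝ) : stdNormalCDF y = (gaussianReal 0 1).real (Set.Iic y) := by
  rw [measureReal_def, gaussianReal_apply_eq_integral 0 one_ne_zero, ENNReal.toReal_ofReal
    (setIntegral_nonneg measurableSet_Iic fun t _ => gaussianPDFReal_nonneg _ _ _), stdNormalCDF,
    ← integral_const_mul]
  simp [gaussianPDFReal]

lemma stdNormalCDF_mem_Ioo (y : ℝ) : stdNormalCDF y ∈ Set.Ioo (0 : ℝ) 1 := by
  have hpos {s : Set ℝ} (hs : volume s ≠ 0) : 0 < (gaussianReal 0 1).real s :=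
    ENNReal.toReal_pos (fun h => hs (gaussianReal_absolutelyContinuous' 0 one_ne_zero h))
      (measure_ne_top _ _)
  have h1 : 0 < (gaussianReal 0 1).real (Set.Iic y) := hpos (by simp)
  have h2 : 0 < (gaussianReal 0 1).real (Set.Iic y)ᶜ := hpos (by simp)
  rw [probReal_compl_eq_one_sub measurableSet_Iic] at h2
  rw [stdNormalCDF_eq]
  exact ⟨h1, by linarith⟩

lemma gaussianReal_Iio_zero (c : ℝ) {v : ℝ≥0} (hv : v ≠ 0) :
    (gaussianReal c v).real (Set.Iio 0) = stdNormalCDF (-c / √v) := by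
  have hs : 0 < √(v : ℝ) := Real.sqrt_pos.2 (by positivity)
  have hmap : gaussianReal c v = (gaussianReal 0 1).map (fun z => √v * z + c) := by
    have : (fun z : ℝ => √v * z + c) = (· + c) ∘ (√v * ·) := rfl
    rw [this, ← Measure.map_map (by fun_prop) (by fun_prop), gaussianReal_map_const_mul,
      gaussianReal_map_add_const]
    congr 1
    · simp
    · ext; simp
  have hpre : (fun z => √v * z + c) ⁻¹' Set.Iio 0 = Set.Iio (-c / √v) := by
    ext z
    simp only [Set.mem_preimage, Set.mem_Iio, lt_div_iff₀ hs]
    constructor <;> intro h <;> linarith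
  have := nullSingletonClass_gaussianReal (μ := 0) (one_ne_zero (α := ℝ≥0))
  rw [stdNormalCDF_eq, hmap, map_measureReal_apply (by fun_prop) measurableSet_Iio, hpre,
    measureReal_def, measureReal_def, measure_congr Iio_ae_eq_Iic]

theorem Q_critical_sqrt (δ ρ c : ℝ) (hδ : 1 / 2 < δ) (hδ1 : δ < 1) (hρ : ρ = 2 - 1 / δ)
    (k N : ℕ → ℕ) (hkN : ∀ᶠ d in atTop, k d < d ∧ d < N d)
    (h1 : Tendsto (fun d : ℕ => (d : ℝ) / (N d : ℝ)) atTop (𝓝 δ))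
    (h2 : Tendsto (fun d : ℕ => (k d : ℝ) / (d : ℝ)) atTop (𝓝 ρ))
    (h3 : Tendsto (fun d : ℕ => ((N d : ℝ) - 2 * d + k d) / Real.sqrt d) atTop (𝓝 c)) :
    Tendsto (fun d : ℕ => Q d (k d) (N d)) atTop
        (𝓝 (stdNormalCDF (-c / Real.sqrt (2 * (1 - ρ))))) ∧
      stdNormalCDF (-c / Real.sqrt (2 * (1 - ρ))) ∈ Set.Ioo (0 : ℝ) 1 := by
  refine ⟨?_, stdNormalCDF_mem_Ioo _⟩
  have hδ0 : 0 < δ := by linarith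
  have hρ0 : 0 < ρ := by
    rw [hρ, sub_pos, div_lt_iff₀ hδ0]; linarith
  have hρ1 : ρ < 1 := by
    have : 1 < 1 / δ := by rwa [lt_div_iff₀ hδ0, one_mul]
    linarith
  have hd : Tendsto (fun d : ℕ => (d : ℝ)) atTop atTop := tendsto_natCast_atTop_atTop
  have hsqrt : Tendsto (fun d : ℕ => √(d : ℝ)) atTop atTop := Real.tendsto_sqrt_atTop.comp hd
  have hN : Tendsto (fun d : ℕ => (N d : ℝ) / d) atTop (𝓝 (2 - ρ)) := by
    have : 2 - ρ = δ⁻¹ := by rw [hρ, one_div]; ring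
    rw [this]
    simpa using h1.inv₀ hδ0.ne'
  have hinv : Tendsto (fun d : ℕ => (1 : ℝ) / d) atTop (𝓝 0) := hd.const_div_atTop 1
  have hnum : Tendsto (fun d => (∑ i ∈ Finset.range (d - k d), ((N d - k d - 1).choose i : ℝ)) /
      2 ^ (N d - k d - 1)) atTop (𝓝 (stdNormalCDF (-c / √(2 * (1 - ρ))))) := by
    lift 2 * (1 - ρ) to ℝ≥0 using (by linarith) with v hv
    have hv0 : v ≠ 0 := by
      rintro rfl
      simp only [NNReal.coe_zero] at hv
      linarith
    have := nullSingletonClass_gaussianReal (μ := c) hv0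
    rw [← gaussianReal_Iio_zero c hv0]
    refine tendsto_binomial_sum hsqrt ?_ ?_ ?_ (measure_singleton 0)
    · filter_upwards [hkN] with d hd
      omega
    · rw [hv, show 2 * (1 - ρ) = 2 - ρ - ρ - 0 by ring]
      refine ((hN.sub h2).sub hinv).congr' ?_
      filter_upwards [hkN] with d ⟨hk, hN⟩
      rw [Nat.cast_sub (by omega), Nat.cast_sub (by omega), Real.sq_sqrt (Nat.cast_nonneg d)]
      push_cast
      ring
    · rw [← sub_zero c]
      refine (h3.sub (hsqrt.const_div_atTop 1)).congr' ?_
      filter_upwards [hkN] with d ⟨hk, hN⟩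
      rw [Nat.cast_sub (by omega), Nat.cast_sub (by omega), Nat.cast_sub (by omega)]
      push_cast
      ring
  have hden : Tendsto (fun d => (∑ i ∈ Finset.range d, ((N d - 1).choose i : ℝ)) /
      2 ^ (N d - 1)) atTop (𝓝 1) := by
    have hone : (gaussianReal (-ρ) 0).real (Set.Iio 0) = 1 := by
      simp [gaussianReal_zero_var, measureReal_def, hρ0]
    rw [← hone]
    refine tendsto_binomial_sum hd ?_ ?_ ?_ ?_
    · filter_upwards [hkN] with d hd
      omega
    · have h := (hN.sub hinv).mul hinv
      rw [mul_zero] at h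
      refine h.congr' ?_
      filter_upwards [hkN] with d ⟨hk, hN⟩
      rw [Nat.cast_sub (by omega)]
      push_cast
      ring
    · have h := (hN.sub hinv).sub_const 2
      rw [show 2 - ρ - 0 - 2 = -ρ by ring] at h
      refine h.congr' ?_
      filter_upwards [hkN] with d ⟨hk, hN⟩
      have : (d : ℝ) ≠ 0 := by
        have : 0 < d := by omega
        positivity
      rw [Nat.cast_sub (by omega)]
      push_cast
      field_simp
    · simp [gaussianReal_zero_var, hρ0.ne']
  refine ((hnum.div hden one_ne_zero).congr' ?_).trans_eq (by rw [div_one])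
  filter_upwards [hkN] with d ⟨hk, hN⟩
  have hpow : (2 : ℝ) ^ (N d - 1) = 2 ^ k d * 2 ^ (N d - k d - 1) := by
    rw [← pow_add]
    congr 1
    omega
  simp only [Pi.div_apply, Q, hpow]
  field_simp
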